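/- arXiv:2406.16121 — 3 statements merged into one kernel-verified Lean document; each statement's English description precedes it below -/
import Mathlib

section
/- Let Y be a finite nonempty type, s' : Y → ℝ a family of clean values, w : Y → ℝ weights with w(y) > 0 for all y and Σ_y w(y) = 1, and β ∈ (0, 1). Define the corrupted-marginal density p(x) = Σ_y w(y) · gaussianPDFReal (√(1-β) · s'(y)) β x. Then for every x ∈ ℝ: x + β · deriv (fun x => Real.log (p x)) x = √(1-β) · Σ_y (w(y) · gaussianPDFReal (√(1-β) · s'(y)) β x / p(x)) · s'(y), i.e. x̃ + β ∇ log p(x̃) equals √(1-β) times the posterior mean of s'. -/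
open ProbabilityTheory

/-- Derivative of the Gaussian density. -/
theorem hasDerivAt_gaussianPDFReal_aux (m : ℝ) (v : NNReal) (hv : 0 < v) (x : ℝ) :
    HasDerivAt (gaussianPDFReal m v) (gaussianPDFReal m v x * ((m - x) / v)) x := by
  have hv' : (v : ℝ) ≠ 0 := by exact_mod_cast hv.ne'
  have h1 : HasDerivAt (fun t : ℝ => -(t - m) ^ 2 / (2 * (v : ℝ))) ((m - x) / v) x := by
    have h := ((((hasDerivAt_id x).sub_const m).pow 2).neg).div_const (2 * (v : ℝ))
    refine h.congr_deriv ?_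
    simp
    field_simp
    ring
  rw [gaussianPDFReal_def]
  exact (h1.exp.const_mul _).congr_deriv (by ring)

/-- Tweedie's identity for the Gaussian corruption kernel (Equation (13)):
`x̃ + β ∇ log p(x̃) = √(1-β) · E[s' | x̃]` for a finite mixture of Gaussians. -/
theorem tweedie_identity_gaussian
    {Y : Type*} [Fintype Y] [Nonempty Y]
    (s' : Y → ℝ) (w : Y → ℝ) (hw : ∀ y, 0 < w y) (hw1 : ∑ y, w y = 1)
    (β : NNReal) (hβ0 : 0 < β) (hβ1 : β < 1)
    (p : ℝ → ℝ)
    (hp : ∀ x, p x = ∑ y, w y * gaussianPDFReal (Real.sqrt (1 - (β : ℝ)) * s' y) β x)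
    (x : ℝ) :
    x + (β : ℝ) * deriv (fun x' => Real.log (p x')) x
      = Real.sqrt (1 - (β : ℝ)) *
          ∑ y, (w y * gaussianPDFReal (Real.sqrt (1 - (β : ℝ)) * s' y) β x / p x) * s' y := by
  have hb : (β : ℝ) ≠ 0 := by exact_mod_cast hβ0.ne'
  have hpos : 0 < p x := by
    rw [hp]
    exact Finset.sum_pos
      (fun y _ => mul_pos (hw y) (gaussianPDFReal_pos _ _ _ hβ0.ne')) Finset.univ_nonempty
  have hd : HasDerivAt p (∑ y, w y * (gaussianPDFReal (Real.sqrt (1 - (β : ℝ)) * s' y) β x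
      * ((Real.sqrt (1 - (β : ℝ)) * s' y - x) / β))) x := by
    rw [funext hp]
    exact HasDerivAt.fun_sum fun y _ =>
      (hasDerivAt_gaussianPDFReal_aux _ β hβ0 x).const_mul (w y)
  rw [(hd.log hpos.ne').deriv]
  have key : (β : ℝ) * (∑ y, w y * (gaussianPDFReal (Real.sqrt (1 - (β : ℝ)) * s' y) β x
      * ((Real.sqrt (1 - (β : ℝ)) * s' y - x) / β)))
      = Real.sqrt (1 - (β : ℝ)) *
        (∑ y, w y * gaussianPDFReal (Real.sqrt (1 - (β : ℝ)) * s' y) β x * s' y) - x * p x := by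
    rw [hp x, Finset.mul_sum, Finset.mul_sum, Finset.mul_sum, ← Finset.sum_sub_distrib]
    refine Finset.sum_congr rfl fun y _ => ?_
    field_simp
  have h2 : ∑ y, (w y * gaussianPDFReal (Real.sqrt (1 - (β : ℝ)) * s' y) β x / p x) * s' y
      = (∑ y, w y * gaussianPDFReal (Real.sqrt (1 - (β : ℝ)) * s' y) β x * s' y) / p x := by
    rw [Finset.sum_div]
    exact Finset.sum_congr rfl fun y _ => by ring
  rw [h2, ← mul_div_assoc, key, sub_div, mul_div_cancel_right₀ _ hpos.ne']
  ring
end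

section
/- Let d ≥ 1, let γ_d be the d-dimensional standard Gaussian measure on Fin d → ℝ, let ψ, ν : Fin d → ℝ and Z > 0. Define φ_ω = Complex.exp (-Complex.I·⟨ω, ψ⟩ + ‖ψ‖²/2 - Real.log Z) and μ_ω = Complex.exp (-Complex.I·⟨ω, ν⟩ + ‖ν‖²/2). Then ∫ φ_ω · conj(μ_ω) dγ_d(ω) = Real.exp (⟨ψ, ν⟩ - Real.log Z) = exp(⟨ψ, ν⟩)/Z. In words: the energy-based transition density exp(ψᵀν)/Z admits the spectral (inner-product) decomposition ⟨φ_ω, μ_ω⟩ under the Gaussian measure over ω. -/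
open MeasureTheory ProbabilityTheory

/-- Spectral (inner-product) decomposition of the energy-based transition density
`exp(ψᵀν)/Z = ⟨φ_ω, μ_ω⟩` under the standard Gaussian measure over ω
(Equations (9)–(10) of the paper). -/
theorem ebm_spectral_decomposition (d : ℕ) (hd : 1 ≤ d)
    (ψ ν : Fin d → ℝ) (Z : ℝ) (hZ : 0 < Z) :
    (∫ ω : Fin d → ℝ,
        Complex.exp (-Complex.I * ((∑ j, ω j * ψ j : ℝ) : ℂ)
            + (((∑ j, ψ j ^ 2) / 2 : ℝ) : ℂ) - ((Real.log Z : ℝ) : ℂ))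
          * (starRingEnd ℂ)
              (Complex.exp (-Complex.I * ((∑ j, ω j * ν j : ℝ) : ℂ)
                + (((∑ j, ν j ^ 2) / 2 : ℝ) : ℂ)))
          ∂(Measure.pi fun _ => gaussianReal 0 1))
        = ((Real.exp ((∑ j, ψ j * ν j) - Real.log Z) : ℝ) : ℂ)
      ∧ Real.exp ((∑ j, ψ j * ν j) - Real.log Z)
        = Real.exp (∑ j, ψ j * ν j) / Z := by
  refine ⟨?_, by rw [Real.exp_sub, Real.exp_log hZ]⟩
  have key : ∀ ω : Fin d → ℝ,
      Complex.exp (-Complex.I * ((∑ j, ω j * ψ j : ℝ) : ℂ)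
            + (((∑ j, ψ j ^ 2) / 2 : ℝ) : ℂ) - ((Real.log Z : ℝ) : ℂ))
          * (starRingEnd ℂ)
              (Complex.exp (-Complex.I * ((∑ j, ω j * ν j : ℝ) : ℂ)
                + (((∑ j, ν j ^ 2) / 2 : ℝ) : ℂ)))
        = Complex.exp ((((∑ j, ψ j ^ 2) / 2 + (∑ j, ν j ^ 2) / 2 - Real.log Z : ℝ)) : ℂ)
          * ∏ j, Complex.exp (((ν j - ψ j : ℝ) : ℂ) * (ω j : ℂ) * Complex.I) := by
    intro ω
    have h : ∑ j, ((ν j - ψ j : ℝ) : ℂ) * (ω j : ℂ) * Complex.I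
        = ((∑ j, ω j * ν j : ℝ) : ℂ) * Complex.I - ((∑ j, ω j * ψ j : ℝ) : ℂ) * Complex.I := by
      rw [← sub_mul, ← Complex.ofReal_sub, ← Finset.sum_sub_distrib, ← Finset.sum_mul]
      congr 1
      rw [Complex.ofReal_sum]
      refine Finset.sum_congr rfl fun j _ => ?_
      push_cast
      ring
    rw [← Complex.exp_conj, ← Complex.exp_add, ← Complex.exp_sum, ← Complex.exp_add, h]
    congr 1
    rw [map_add, map_mul, map_neg, Complex.conj_I, Complex.conj_ofReal, Complex.conj_ofReal]
    rw [Complex.ofReal_sub, Complex.ofReal_add]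
    ring
  have one : ∀ t : ℝ, ∫ x : ℝ, Complex.exp ((t : ℂ) * (x : ℂ) * Complex.I) ∂(gaussianReal 0 1)
      = Complex.exp ((-(t ^ 2 / 2) : ℝ) : ℂ) := by
    intro t
    rw [← charFun_apply_real, charFun_gaussianReal]
    congr 1
    push_cast
    ring
  simp_rw [key]
  rw [integral_const_mul, integral_fintype_prod_eq_prod
    (fun j (x : ℝ) => Complex.exp (((ν j - ψ j : ℝ) : ℂ) * (x : ℂ) * Complex.I))]
  simp_rw [one]
  rw [← Complex.exp_sum, ← Complex.exp_add, ← Complex.ofReal_sum, ← Complex.ofReal_add,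
    ← Complex.ofReal_exp]
  congr 2
  have h : ∑ j, ψ j * ν j = (∑ j, ψ j ^ 2) / 2 + (∑ j, ν j ^ 2) / 2
      + ∑ j, (-((ν j - ψ j) ^ 2 / 2)) := by
    rw [Finset.sum_div, Finset.sum_div, ← Finset.sum_add_distrib, ← Finset.sum_add_distrib]
    refine Finset.sum_congr rfl fun j _ => ?_
    ring
  rw [h]
  ring
end

section
/- Let T ∈ ℕ, β : Fin T → ℝ with 0 < β_t < 1 for every t, x₀ ∈ ℝ, and α := ∏_{t} (1 - β_t). Define F : (Fin T → ℝ) → ℝ by iterating the forward diffusion recursion starting from x₀: given noise vector ε, set y_0 = x₀ and y_{t+1} = √(1 - β_t)·y_t + √(β_t)·ε_t, with F(ε) the final value y_T. Then the pushforward of the T-fold product of standard Gaussians, Measure.pi (fun _ => gaussianReal 0 1), under F equals gaussianReal (√α · x₀) (1 - α). That is, the T-step forward-corrupted marginal given x₀ is q(x_T | x₀) = N(√(α_T) x₀, (1 - α_T)). -/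
open MeasureTheory ProbabilityTheory

theorem fdm_aux (x₀ : ℝ) (T : ℕ) : ∀ (β : Fin T → ℝ) (_ : ∀ t, 0 < β t ∧ β t < 1)
    (y : (Fin T → ℝ) → ℕ → ℝ) (_ : ∀ ε, y ε 0 = x₀)
    (_ : ∀ ε, ∀ t : Fin T,
      y ε ((t : ℕ) + 1) = Real.sqrt (1 - β t) * y ε (t : ℕ) + Real.sqrt (β t) * ε t),
    Measurable (fun ε => y ε T) ∧
    Measure.map (fun ε => y ε T) (Measure.pi fun _ : Fin T => gaussianReal 0 1)
      = gaussianReal (Real.sqrt (∏ t, (1 - β t)) * x₀) ((1 - ∏ t, (1 - β t)).toNNReal) := by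
  induction T with
  | zero =>
    intro β hβ y hy0 hyrec
    simp only [hy0]
    refine ⟨measurable_const, ?_⟩
    simp [Measure.map_const]
  | succ T ih =>
    intro β hβ y hy0 hyrec
    have key : ∀ ε : Fin (T + 1) → ℝ, ∀ n, n ≤ T →
        y ε n = y (Fin.snoc (fun i : Fin T => ε i.castSucc) (0 : ℝ)) n := by
      intro ε n
      induction n with
      | zero => intro _; rw [hy0, hy0]
      | succ n ihn =>
        intro hn
        have h1 := hyrec ε (Fin.castSucc ⟨n, hn⟩)
        have h2 := hyrec (Fin.snoc (fun i : Fin T => ε i.castSucc) (0 : ℝ))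
          (Fin.castSucc ⟨n, hn⟩)
        rw [Fin.snoc_castSucc] at h2
        simp only [Fin.val_castSucc] at h1 h2
        rw [h1, h2, ihn (by omega)]
    obtain ⟨hm, hlaw⟩ := ih (fun t => β t.castSucc) (fun t => hβ _)
      (fun ε n => y (Fin.snoc ε (0 : ℝ)) n) (fun ε => hy0 _) (by
        intro ε t
        have h2 := hyrec (Fin.snoc ε (0 : ℝ)) t.castSucc
        rw [Fin.snoc_castSucc] at h2
        simpa only [Fin.val_castSucc] using h2)
    set G : (Fin T → ℝ) → ℝ := fun ε => y (Fin.snoc ε (0 : ℝ)) T with hG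
    set b := β (Fin.last T) with hb
    set a := ∏ t : Fin T, (1 - β t.castSucc) with ha
    have hb0 : 0 < b := (hβ _).1
    have hb1 : b < 1 := (hβ _).2
    have ha0 : 0 ≤ a := Finset.prod_nonneg fun t _ => by linarith [(hβ t.castSucc).2]
    have ha1 : a ≤ 1 := Finset.prod_le_one (fun t _ => by linarith [(hβ t.castSucc).2])
      (fun t _ => by linarith [(hβ t.castSucc).1])
    have hmp := measurePreserving_piFinSuccAbove
      (fun _ : Fin (T + 1) => gaussianReal 0 1) (Fin.last T)
    have hfun : (fun ε => y ε (T + 1)) =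
        ((fun p : ℝ × ℝ => p.1 + p.2) ∘
          (Prod.map (fun x => Real.sqrt b * x) ((fun x => Real.sqrt (1 - b) * x) ∘ G))) ∘
        (MeasurableEquiv.piFinSuccAbove (fun _ : Fin (T + 1) => ℝ) (Fin.last T)) := by
      funext ε
      have h1 := hyrec ε (Fin.last T)
      simp only [Fin.val_last] at h1
      rw [h1, key ε T le_rfl]
      simp [hG, MeasurableEquiv.piFinSuccAbove, Fin.insertNthEquiv, Fin.removeNth,
        Fin.init_def]
      ring
    have hM1 : Measurable (fun x : ℝ => Real.sqrt b * x) := by fun_prop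
    have hM0 : Measurable (fun x : ℝ => Real.sqrt (1 - b) * x) := by fun_prop
    have hM2 := hM0.comp hm
    have hadd : Measurable (fun p : ℝ × ℝ => p.1 + p.2) := by fun_prop
    refine ⟨?_, ?_⟩
    · rw [hfun]
      exact (hadd.comp (hM1.prodMap hM2)).comp (MeasurableEquiv.measurable _)
    · rw [hfun, ← Measure.map_map (hadd.comp (hM1.prodMap hM2)) (MeasurableEquiv.measurable _),
        hmp.map_eq, ← Measure.map_map hadd (hM1.prodMap hM2),
        ← Measure.map_prod_map _ _ hM1 hM2, ← Measure.map_map hM0 hm, hlaw,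
        gaussianReal_map_const_mul, gaussianReal_map_const_mul]
      change Measure.conv _ _ = _
      rw [gaussianReal_conv_gaussianReal, Fin.prod_univ_castSucc]
      congr 1
      · rw [← hb, ← ha, Real.sqrt_mul ha0]; ring
      · rw [← hb, ← ha]
        apply NNReal.eq
        have h3 : 0 ≤ 1 - a * (1 - b) := by nlinarith
        simp [Real.sq_sqrt hb0.le, Real.sq_sqrt (sub_nonneg.2 hb1.le), h3, ha1]
        ring

/-- Closed-form marginal of the `T`-step forward diffusion process: iterating
`y_{t+1} = √(1-β_t)·y_t + √(β_t)·ε_t` from `x₀` with independent standard Gaussian noise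
yields the law `N(√α · x₀, 1 - α)`, where `α = ∏ t, (1 - β t)`. -/
theorem forward_diffusion_marginal (T : ℕ) (β : Fin T → ℝ)
    (hβ : ∀ t, 0 < β t ∧ β t < 1) (x₀ : ℝ)
    (α : ℝ) (hα : α = ∏ t, (1 - β t))
    (y : (Fin T → ℝ) → ℕ → ℝ)
    (hy0 : ∀ ε, y ε 0 = x₀)
    (hyrec : ∀ ε, ∀ t : Fin T,
      y ε ((t : ℕ) + 1) = Real.sqrt (1 - β t) * y ε (t : ℕ) + Real.sqrt (β t) * ε t)
    (F : (Fin T → ℝ) → ℝ) (hF : ∀ ε, F ε = y ε T) :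
    Measure.map F (Measure.pi fun _ : Fin T => gaussianReal 0 1)
      = gaussianReal (Real.sqrt α * x₀) ((1 - α).toNNReal) := by
  obtain rfl : F = fun ε => y ε T := funext hF
  subst hα
  exact (fdm_aux x₀ T β hβ y hy0 hyrec).2
end
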